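/- arXiv:2306.02173 — 3 statements merged into one kernel-verified Lean document; each statement's English description precedes it below -/
import Mathlib

section
/- Let F be the case (I) vector field F(φ₁,φ₂) = (ω + a·cos φ₁ − κ·sin(φ₁−φ₂), ω + a·cos φ₂ + κ·sin(φ₂−φ₁)) with a ≠ 0. If (φ₁,φ₂) ∈ ℝ² is an equilibrium, i.e. F(φ₁,φ₂) = (0,0), then cos φ₁ = cos φ₂; consequently every equilibrium lies either in the synchrony subspace (φ₁ ≡ φ₂ mod 2π) or in the reversibility subspace Fix R (φ₁ ≡ −φ₂ mod 2π). -/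
open Real

/-- The case (I) vector field: two identical active rotators with
anti-reciprocal Kuramoto-type coupling. -/
noncomputable def caseI (ω a κ : ℝ) : ℝ × ℝ → ℝ × ℝ := fun p =>
  (ω + a * Real.cos p.1 - κ * Real.sin (p.1 - p.2),
   ω + a * Real.cos p.2 + κ * Real.sin (p.2 - p.1))

-- The coupling is anti-reciprocal: it acts on both rotators by the same term, so it cancels here.
theorem caseI_fst_sub_snd (ω a κ : ℝ) (p : ℝ × ℝ) :
    (caseI ω a κ p).1 - (caseI ω a κ p).2 = a * (cos p.1 - cos p.2) := by
  have sin_swap : sin (p.2 - p.1) = -sin (p.1 - p.2) := by rw [← sin_neg, neg_sub]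
  simp only [caseI, sin_swap]
  ring

theorem caseI_fst_eq_snd_iff (ω κ : ℝ) {a : ℝ} (ha : a ≠ 0) (p : ℝ × ℝ) :
    (caseI ω a κ p).1 = (caseI ω a κ p).2 ↔ cos p.1 = cos p.2 := by
  rw [← sub_eq_zero, caseI_fst_sub_snd, mul_eq_zero_iff_left ha, sub_eq_zero]

theorem cos_eq_cos_iff_exists_eq_or_exists_eq_neg (x y : ℝ) :
    cos x = cos y ↔ (∃ k : ℤ, x = y + 2 * π * k) ∨ (∃ k : ℤ, x = -y + 2 * π * k) := by
  rw [eq_comm, cos_eq_cos_iff, exists_or]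
  simp only [mul_right_comm 2 _ π, sub_eq_add_neg, add_comm]

theorem stmt_6_general (ω a κ : ℝ) (ha : a ≠ 0) (p : ℝ × ℝ)
    (hvel : (caseI ω a κ p).1 = (caseI ω a κ p).2) :
    cos p.1 = cos p.2 ∧
      ((∃ k : ℤ, p.1 = p.2 + 2 * π * k) ∨ (∃ k : ℤ, p.1 = -p.2 + 2 * π * k)) :=
  have hcos : cos p.1 = cos p.2 := (caseI_fst_eq_snd_iff ω κ ha p).1 hvel
  ⟨hcos, (cos_eq_cos_iff_exists_eq_or_exists_eq_neg p.1 p.2).1 hcos⟩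

/-- for `a ≠ 0`, every equilibrium of the case (I) system
satisfies `cos φ₁ = cos φ₂` and hence lies in the synchrony subspace
(`φ₁ ≡ φ₂ mod 2π`) or in the reversibility subspace `Fix R`
(`φ₁ ≡ -φ₂ mod 2π`). -/
theorem stmt_6 (ω a κ : ℝ) (ha : a ≠ 0) (p : ℝ × ℝ)
    (heq : caseI ω a κ p = 0) :
    Real.cos p.1 = Real.cos p.2 ∧
      ((∃ k : ℤ, p.1 = p.2 + 2 * π * k) ∨ (∃ k : ℤ, p.1 = -p.2 + 2 * π * k)) :=
  stmt_6_general ω a κ ha p (by rw [heq, Prod.fst_zero, Prod.snd_zero])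
end

section
/- Let G be the case (II) vector field G(φ₁,φ₂) = (ω + a·cos φ₁ − κ·cos(φ₁−φ₂), ω + a·cos φ₂ − κ·cos(φ₂−φ₁)) with a ≠ 0. If (φ₁,φ₂) ∈ ℝ² is an equilibrium, i.e. G(φ₁,φ₂) = (0,0), then cos φ₁ = cos φ₂; consequently every equilibrium lies either in the synchrony subspace (φ₁ ≡ φ₂ mod 2π) or in the reversibility subspace Fix R (φ₁ ≡ −φ₂ mod 2π). -/
open Real

/-- The case (II) vector field: two identical active rotators with reciprocal
even Kuramoto-type coupling. -/
noncomputable def caseII (ω a κ : ℝ) : ℝ × ℝ → ℝ × ℝ := fun p =>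
  (ω + a * Real.cos p.1 - κ * Real.cos (p.1 - p.2),
   ω + a * Real.cos p.2 - κ * Real.cos (p.2 - p.1))

theorem caseII_fst_sub_snd (ω a κ : ℝ) (p : ℝ × ℝ) :
    (caseII ω a κ p).1 - (caseII ω a κ p).2 = a * (Real.cos p.1 - Real.cos p.2) := by
  have coupling_even : Real.cos (p.2 - p.1) = Real.cos (p.1 - p.2) := by
    rw [← Real.cos_neg, neg_sub]
  simp only [caseII, coupling_even]
  ring

theorem caseII_fst_eq_snd_iff {ω a κ : ℝ} (ha : a ≠ 0) {p : ℝ × ℝ} :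
    (caseII ω a κ p).1 = (caseII ω a κ p).2 ↔ Real.cos p.1 = Real.cos p.2 := by
  rw [← sub_eq_zero, caseII_fst_sub_snd, mul_eq_zero_iff_left ha, sub_eq_zero]

theorem cos_eq_cos_iff_eq_add_or_eq_neg_add {x y : ℝ} :
    Real.cos x = Real.cos y ↔
      (∃ k : ℤ, x = y + 2 * π * k) ∨ (∃ k : ℤ, x = -y + 2 * π * k) := by
  rw [eq_comm, Real.cos_eq_cos_iff, exists_or]
  have add_form (k : ℤ) : 2 * k * π + y = y + 2 * π * k := by ring
  have sub_form (k : ℤ) : 2 * k * π - y = -y + 2 * π * k := by ring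
  simp only [add_form, sub_form]

/-- for `a ≠ 0`, every equilibrium of the case (II) system
satisfies `cos φ₁ = cos φ₂` and hence lies in the synchrony subspace
(`φ₁ ≡ φ₂ mod 2π`) or in the reversibility subspace `Fix R`
(`φ₁ ≡ -φ₂ mod 2π`). -/
theorem stmt_15 (ω a κ : ℝ) (ha : a ≠ 0) (p : ℝ × ℝ)
    (heq : caseII ω a κ p = 0) :
    Real.cos p.1 = Real.cos p.2 ∧
      ((∃ k : ℤ, p.1 = p.2 + 2 * π * k) ∨ (∃ k : ℤ, p.1 = -p.2 + 2 * π * k)) := by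
  have cos_eq : Real.cos p.1 = Real.cos p.2 :=
    (caseII_fst_eq_snd_iff ha).1 (by rw [heq, Prod.fst_zero, Prod.snd_zero])
  exact ⟨cos_eq, cos_eq_cos_iff_eq_add_or_eq_neg_add.1 cos_eq⟩
end

section
/- Let G be the case (II) vector field G(φ₁,φ₂) = (ω + a·cos φ₁ − κ·cos(φ₁−φ₂), ω + a·cos φ₂ − κ·cos(φ₂−φ₁)). The point (0,0) is an equilibrium of G if and only if ω + a = κ, and the point (π,π) is an equilibrium of G if and only if ω − a = κ; in both cases the Jacobian matrix of G at that point is the zero 2×2 matrix, so the linearization has a geometrically double zero eigenvalue. These are the degenerate equilibria of the reversible equivariant sink/source bifurcation occurring along the lines ω ± a = κ, located in Fix R ∩ Fix γ_m = {(0,0),(π,π)} (mod 2π). -/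
open Real

/-- The Jacobian matrix of a planar vector field at a point. -/
noncomputable def jac (F : ℝ × ℝ → ℝ × ℝ) (p : ℝ × ℝ) : Matrix (Fin 2) (Fin 2) ℝ :=
  !![(fderiv ℝ F p (1, 0)).1, (fderiv ℝ F p (0, 1)).1;
     (fderiv ℝ F p (1, 0)).2, (fderiv ℝ F p (0, 1)).2]

section

variable (ω a κ : ℝ)

theorem caseII_diag_eq_zero_iff (x : ℝ) : caseII ω a κ (x, x) = 0 ↔ ω + a * cos x = κ := by
  simp [caseII, Prod.ext_iff, sub_eq_zero]

theorem hasFDerivAt_caseII (p : ℝ × ℝ) :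
    HasFDerivAt (caseII ω a κ)
      (((-(a * sin p.1) + κ * sin (p.1 - p.2)) • ContinuousLinearMap.fst ℝ ℝ ℝ -
          (κ * sin (p.1 - p.2)) • ContinuousLinearMap.snd ℝ ℝ ℝ).prod
        ((-(a * sin p.2) + κ * sin (p.2 - p.1)) • ContinuousLinearMap.snd ℝ ℝ ℝ -
          (κ * sin (p.2 - p.1)) • ContinuousLinearMap.fst ℝ ℝ ℝ)) p := by
  have hfst : HasFDerivAt Prod.fst (ContinuousLinearMap.fst ℝ ℝ ℝ) p := hasFDerivAt_fst
  have hsnd : HasFDerivAt Prod.snd (ContinuousLinearMap.snd ℝ ℝ ℝ) p := hasFDerivAt_snd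
  have hcomp₁ := ((hfst.cos.const_mul a).const_add ω).sub ((hfst.sub hsnd).cos.const_mul κ)
  have hcomp₂ := ((hsnd.cos.const_mul a).const_add ω).sub ((hsnd.sub hfst).cos.const_mul κ)
  refine (hcomp₁.prodMk hcomp₂).congr_fderiv ?_
  ext <;> simp

theorem jac_caseII (p : ℝ × ℝ) :
    jac (caseII ω a κ) p =
      !![-(a * sin p.1) + κ * sin (p.1 - p.2), -(κ * sin (p.1 - p.2));
         -(κ * sin (p.2 - p.1)), -(a * sin p.2) + κ * sin (p.2 - p.1)] := by
  simp [jac, (hasFDerivAt_caseII ω a κ p).fderiv]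

/-- The coupling is even in the phase difference, so on the diagonal it has no linear part. -/
theorem jac_caseII_diag (x : ℝ) :
    jac (caseII ω a κ) (x, x) = Matrix.scalar (Fin 2) (-(a * sin x)) := by
  rw [jac_caseII]
  ext i j
  fin_cases i <;> fin_cases j <;> simp

theorem stmt_17_general :
    (caseII ω a κ (0, 0) = 0 ↔ ω + a = κ) ∧
    (caseII ω a κ (π, π) = 0 ↔ ω - a = κ) ∧
    jac (caseII ω a κ) (0, 0) = 0 ∧
    jac (caseII ω a κ) (π, π) = 0 := by
  refine ⟨?_, ?_, ?_, ?_⟩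
  · simpa using caseII_diag_eq_zero_iff ω a κ 0
  · simpa [← sub_eq_add_neg] using caseII_diag_eq_zero_iff ω a κ π
  · simp [jac_caseII_diag]
  · simp [jac_caseII_diag]

end

/-- `(0,0)` is an equilibrium of the case (II) system iff
`ω + a = κ`, and `(π,π)` is an equilibrium iff `ω - a = κ`; in both cases the
Jacobian is the zero matrix (geometrically double zero eigenvalue). These are
the degenerate equilibria of the reversible equivariant sink/source
bifurcation along `ω ± a = κ`, located in `Fix R ∩ Fix γ_m`. -/
theorem stmt_17 (ω a κ : ℝ) :
    (caseII ω a κ (0, 0) = 0 ↔ ω + a = κ) ∧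
    (caseII ω a κ (π, π) = 0 ↔ ω - a = κ) ∧
    (ω + a = κ → jac (caseII ω a κ) (0, 0) = 0) ∧
    (ω - a = κ → jac (caseII ω a κ) (π, π) = 0) := by
  obtain ⟨eq_zero, eq_pi, jac_zero, jac_pi⟩ := stmt_17_general ω a κ
  exact ⟨eq_zero, eq_pi, fun _ => jac_zero, fun _ => jac_pi⟩
end
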